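/- Let A and C be real m×m matrices with rank(A) ≤ 1. Then for every k with 1 ≤ k ≤ m, σ_k(C + A) = σ_k(C) + tr(T_{k−1}(C)·A). -/

import Mathlib

/-!
The adjugate of the pencil `1 + t • C` is the polynomial `∑ k, t ^ k • T_k(C)`: comparing
coefficients in `adj(1 + t • C) * (1 + t • C) = det(1 + t • C) • 1` gives exactly the recursion
`T_{k+1}(C) + T_k(C) * C = σ_{k+1}(C) • 1`. A matrix `A` of rank at most one is a product `u vᵀ`, so
the matrix determinant lemma, written with the adjugate to avoid any invertibility hypothesis, gives
`det(1 + t • (C + A)) = det(1 + t • C) + t * tr(adj(1 + t • C) * A)`. Now take the coefficient of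
`t ^ k`.
-/

/-- `sigmaP A j` is the coefficient `σ_j(A)` of `t^j` in `det(I + t·A)`. -/
noncomputable def sigmaP {m : ℕ} (A : Matrix (Fin m) (Fin m) ℝ) (j : ℕ) : ℝ :=
  Polynomial.coeff (Matrix.det ((1 : Matrix (Fin m) (Fin m) (Polynomial ℝ)) +
    (Polynomial.X : Polynomial ℝ) • A.map Polynomial.C)) j

/-- The Newton transformation
`T_k(A) = σ_k(A)·I − σ_{k−1}(A)·A + σ_{k−2}(A)·A² − ··· + (−1)^k·A^k`. -/
noncomputable def newtonT {m : ℕ} (A : Matrix (Fin m) (Fin m) ℝ) (k : ℕ) :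
    Matrix (Fin m) (Fin m) ℝ :=
  ∑ i ∈ Finset.range (k + 1), ((-1 : ℝ) ^ i * sigmaP A (k - i)) • A ^ i

/-- `sigmaMulti A lam` is the coefficient `σ_λ(A₁, …, A_k)` of `t₁^{λ₁}···t_k^{λ_k}` in
`det(I_m + t₁A₁ + ··· + t_kA_k)`. -/
noncomputable def sigmaMulti {m k : ℕ} (A : Fin k → Matrix (Fin m) (Fin m) ℝ)
    (lam : Fin k → ℕ) : ℝ :=
  MvPolynomial.coeff (Finsupp.equivFunOnFinite.symm lam)
    (Matrix.det ((1 : Matrix (Fin m) (Fin m) (MvPolynomial (Fin k) ℝ)) +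
      ∑ i, (MvPolynomial.X i : MvPolynomial (Fin k) ℝ) • (A i).map MvPolynomial.C))

section RankOneUpdate

open Matrix Polynomial

theorem exists_eq_vecMulVec_of_rank_le_one {K m n : Type*} [Field K] [Fintype n]
    {A : Matrix m n K} (hA : A.rank ≤ 1) : ∃ u v, A = vecMulVec u v := by
  classical
  obtain ⟨⟨u, _⟩, hu⟩ := finrank_le_one_iff.mp hA
  have hcol (j : n) : ∃ c : K, c • u = A.col j := by
    obtain ⟨c, hc⟩ := hu ⟨A.mulVecLin (Pi.single j 1), LinearMap.mem_range_self _ _⟩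
    exact ⟨c, by simpa using congrArg Subtype.val hc⟩
  choose v hv using hcol
  refine ⟨u, v, Matrix.ext fun i j => ?_⟩
  simpa [vecMulVec_apply, mul_comm] using (congrFun (hv j) i).symm

variable {R n : Type*} [CommRing R] [Fintype n] [DecidableEq n]

theorem det_add_vecMulVec_of_isLeftRegular {M : Matrix n n R} (hM : IsLeftRegular M.det)
    (u v : n → R) : (M + vecMulVec u v).det = M.det + (M.adjugate * vecMulVec u v).trace := by
  let U : Matrix n Unit R := replicateCol Unit u
  let V : Matrix Unit n R := replicateRow Unit v
  -- Column elimination in the bordered matrix, scaled by `det M` to avoid inverting `M`.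
  have helim : fromBlocks M U (-V) 1 * fromBlocks 1 (-(M.adjugate * U)) 0 (M.det • 1) =
      fromBlocks M 0 (-V) (V * (M.adjugate * U) + M.det • 1) := by
    simp [fromBlocks_multiply, ← Matrix.mul_assoc, mul_adjugate]
  have hdet : (M + U * V).det * M.det = M.det * (V * (M.adjugate * U) + M.det • 1).det := by
    simpa [det_mul, det_fromBlocks_one₂₂] using congrArg det helim
  have htrace : (M.adjugate * (U * V)).trace = (V * (M.adjugate * U)).trace := by
    rw [← Matrix.mul_assoc, trace_mul_comm]
  have hcorner : (V * (M.adjugate * U) + M.det • 1).det =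
      M.det + (M.adjugate * (U * V)).trace := by
    rw [htrace]
    simp [det_unique, trace, add_comm]
  rw [mul_comm, hcorner] at hdet
  rw [vecMulVec_eq Unit]
  exact hM hdet

theorem det_add_vecMulVec (M : Matrix n n R) (u v : n → R) :
    (M + vecMulVec u v).det = M.det + (M.adjugate * vecMulVec u v).trace := by
  -- `X • 1 + M` has monic, hence regular, determinant and specialises to `M` at `X = 0`.
  let N : Matrix n n R[X] := (X : R[X]) • 1 + M.map C
  let f : R[X] →+* R := evalRingHom 0
  have hN : IsLeftRegular N.det :=
    (Monic.isRegular (leadingCoeff_det_X_one_add_C M)).left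
  have hNM : f.mapMatrix N = M := by
    ext i j
    simp [N, f]
  have huv : f.mapMatrix (vecMulVec (C ∘ u) (C ∘ v)) = vecMulVec u v := by
    ext i j
    simp [f, vecMulVec_apply]
  have h := congrArg f (det_add_vecMulVec_of_isLeftRegular hN (C ∘ u) (C ∘ v))
  have htrace (P : Matrix n n R[X]) : f P.trace = (f.mapMatrix P).trace :=
    AddMonoidHom.map_trace f P
  simpa only [map_add, RingHom.map_det, htrace, map_mul, RingHom.map_adjugate, hNM, huv] using h

end RankOneUpdate

section NewtonTransform

open Matrix Polynomial

variable {R n : Type*} [CommRing R] [DecidableEq n]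

/-- The matrix pencil `1 + X • A` over `R[X]`, whose determinant is the generating polynomial of the
`σ_j(A)`. -/
noncomputable def unitPencil (A : Matrix n n R) : Matrix n n R[X] :=
  1 + (X : R[X]) • A.map C

theorem unitPencil_add (A B : Matrix n n R) :
    unitPencil (A + B) = unitPencil A + (X : R[X]) • B.map C := by
  rw [unitPencil, unitPencil, Matrix.map_add _ C.map_add, smul_add, add_assoc]

variable [Fintype n]

/-- The function `σ_j` (the `j`-th elementary symmetric function of the eigenvalues) of a square
matrix over a commutative ring, generalising `sigmaP`. -/
noncomputable def matrixEsymm (A : Matrix n n R) (j : ℕ) : R :=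
  (unitPencil A).det.coeff j

/-- The Newton transformation `T_k` of a square matrix over a commutative ring, generalising
`newtonT`. -/
noncomputable def newtonTransform (A : Matrix n n R) (k : ℕ) : Matrix n n R :=
  ∑ i ∈ Finset.range (k + 1), ((-1 : R) ^ i * matrixEsymm A (k - i)) • A ^ i

theorem newtonTransform_zero (A : Matrix n n R) :
    newtonTransform A 0 = matrixEsymm A 0 • 1 := by
  simp [newtonTransform]

theorem newtonTransform_succ (A : Matrix n n R) (k : ℕ) :
    newtonTransform A (k + 1) = matrixEsymm A (k + 1) • 1 - newtonTransform A k * A := by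
  rw [newtonTransform, Finset.sum_range_succ', newtonTransform, Finset.sum_mul, add_comm,
    sub_eq_add_neg, ← Finset.sum_neg_distrib]
  simp [pow_succ]

theorem matPolyEquiv_unitPencil (A : Matrix n n R) :
    matPolyEquiv (unitPencil A) = 1 + X * C A := by
  simp [unitPencil]

theorem matPolyEquiv_adjugate_unitPencil_add (A : Matrix n n R) :
    matPolyEquiv (unitPencil A).adjugate + matPolyEquiv (unitPencil A).adjugate * C A * X =
      (unitPencil A).det.map (algebraMap R (Matrix n n R)) := by
  rw [mul_assoc, ← X_mul, ← matPolyEquiv_smul_one, ← adjugate_mul, map_mul,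
    matPolyEquiv_unitPencil, mul_add, mul_one]

theorem coeff_matPolyEquiv_adjugate_unitPencil (A : Matrix n n R) (k : ℕ) :
    (matPolyEquiv (unitPencil A).adjugate).coeff k = newtonTransform A k := by
  set B := matPolyEquiv (unitPencil A).adjugate with hB
  have hcoeff (j : ℕ) : B.coeff j + (B * C A * X).coeff j = matrixEsymm A j • 1 := by
    rw [← coeff_add, hB, matPolyEquiv_adjugate_unitPencil_add, coeff_map,
      Algebra.algebraMap_eq_smul_one, matrixEsymm]
  induction k with
  | zero => rw [newtonTransform_zero, ← hcoeff 0, coeff_mul_X_zero, add_zero]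
  | succ k ih =>
    rw [newtonTransform_succ, ← hcoeff (k + 1), coeff_mul_X, coeff_mul_C, ih, add_sub_cancel_right]

theorem coeff_trace (M : Matrix n n R[X]) (k : ℕ) :
    M.trace.coeff k = ((matPolyEquiv M).coeff k).trace := by
  simp [trace]

theorem det_unitPencil_add_vecMulVec (A : Matrix n n R) (u v : n → R) :
    (unitPencil (A + vecMulVec u v)).det =
      (unitPencil A).det + X * ((unitPencil A).adjugate * (vecMulVec u v).map C).trace := by
  have hvec : (X : R[X]) • (vecMulVec u v).map C = vecMulVec ((X : R[X]) • (C ∘ u)) (C ∘ v) := by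
    ext1 i j
    simp only [Matrix.smul_apply, map_apply, vecMulVec_apply, C_mul, Pi.smul_apply,
      Function.comp_apply, smul_mul_assoc]
  rw [unitPencil_add, hvec, det_add_vecMulVec, ← hvec, Matrix.mul_smul, trace_smul, smul_eq_mul]

theorem matrixEsymm_add_vecMulVec (A : Matrix n n R) (u v : n → R) (k : ℕ) :
    matrixEsymm (A + vecMulVec u v) (k + 1) =
      matrixEsymm A (k + 1) + (newtonTransform A k * vecMulVec u v).trace := by
  rw [matrixEsymm, det_unitPencil_add_vecMulVec, coeff_add, coeff_X_mul, coeff_trace, map_mul,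
    matPolyEquiv_map_C, coeff_mul_C, coeff_matPolyEquiv_adjugate_unitPencil, ← matrixEsymm]

theorem stmt4_general {K : Type*} [Field K] (A B : Matrix n n K) (hA : A.rank ≤ 1) (k : ℕ)
    (hk : 1 ≤ k) :
    matrixEsymm (B + A) k = matrixEsymm B k + (newtonTransform B (k - 1) * A).trace := by
  obtain ⟨u, v, rfl⟩ := exists_eq_vecMulVec_of_rank_le_one hA
  obtain ⟨k, rfl⟩ := Nat.exists_eq_add_of_le' hk
  exact matrixEsymm_add_vecMulVec B u v k

end NewtonTransform

theorem stmt4 {m : ℕ} (A C : Matrix (Fin m) (Fin m) ℝ) (hA : A.rank ≤ 1)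
    (k : ℕ) (hk1 : 1 ≤ k) (hkm : k ≤ m) :
    sigmaP (C + A) k = sigmaP C k + Matrix.trace (newtonT C (k - 1) * A) :=
  stmt4_general A C hA k hk1
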